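/- arXiv:1211.0414 — 3 statements merged into one kernel-verified Lean document; each statement's English description precedes it below -/
import Mathlib

section
/- Let (H,d) be a Hadamard space, (x_n) ⊂ H a bounded sequence, and x ∈ H. Then x_n → x (strongly, in the metric) if and only if (x_n) weakly converges to x and there exists some y ∈ H with d(x_n,y) → d(x,y). -/
open Filter Topology
open scoped Classical

/-- `γ`, restricted to `[0,1]`, is an affinely parametrized geodesic. -/
def IsGeodesic {H : Type*} [MetricSpace H] (γ : ℝ → H) : Prop :=
  ∀ s ∈ Set.Icc (0:ℝ) 1, ∀ t ∈ Set.Icc (0:ℝ) 1,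
    dist (γ s) (γ t) = |s - t| * dist (γ 0) (γ 1)

/-- A Hadamard space: a complete geodesic metric space satisfying the CAT(0) inequality. -/
structure HadamardSpace (H : Type*) [MetricSpace H] [CompleteSpace H] : Prop where
  geodesic : ∀ x y : H, ∃ γ : ℝ → H, IsGeodesic γ ∧ γ 0 = x ∧ γ 1 = y
  cat0 : ∀ (x : H) (γ : ℝ → H), IsGeodesic γ → ∀ t ∈ Set.Icc (0:ℝ) 1,
      dist x (γ t) ^ 2 ≤ (1 - t) * dist x (γ 0) ^ 2 + t * dist x (γ 1) ^ 2
        - t * (1 - t) * dist (γ 0) (γ 1) ^ 2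

/-- A set is (geodesically) convex if it contains every geodesic segment between its points. -/
def GeodesicConvex {H : Type*} [MetricSpace H] (C : Set H) : Prop :=
  ∀ γ : ℝ → H, IsGeodesic γ → γ 0 ∈ C → γ 1 ∈ C → ∀ t ∈ Set.Icc (0:ℝ) 1, γ t ∈ C

/-- A function `f : H → (−∞,∞]` is convex if it is convex along every geodesic. -/
def ConvexFun {H : Type*} [MetricSpace H] (f : H → EReal) : Prop :=
  ∀ γ : ℝ → H, IsGeodesic γ → ∀ t ∈ Set.Icc (0:ℝ) 1,
    f (γ t) ≤ ((1 - t : ℝ) : EReal) * f (γ 0) + ((t : ℝ) : EReal) * f (γ 1)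

/-- `f` is strongly convex with parameter `β > 0`. -/
def StronglyConvexWith {H : Type*} [MetricSpace H] (β : ℝ) (f : H → EReal) : Prop :=
  ∀ γ : ℝ → H, IsGeodesic γ → ∀ t ∈ Set.Icc (0:ℝ) 1,
    f (γ t) ≤ ((1 - t : ℝ) : EReal) * f (γ 0) + ((t : ℝ) : EReal) * f (γ 1)
      - ((β * (t * (1 - t)) * dist (γ 0) (γ 1) ^ 2 : ℝ) : EReal)

/-- `f : H → (−∞,∞]` is proper (not identically `∞`, never `−∞`), convex and lsc. -/
def ProperConvexLsc {H : Type*} [MetricSpace H] (f : H → EReal) : Prop :=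
  (∃ x, f x ≠ ⊤) ∧ (∀ x, f x ≠ ⊥) ∧ ConvexFun f ∧ LowerSemicontinuous f

/-- `c` is an asymptotic center of the (bounded) sequence `x`:
it minimizes `y ↦ limsup_n d(y, x_n)²`. -/
def IsAsymptoticCenter {H : Type*} [MetricSpace H] (x : ℕ → H) (c : H) : Prop :=
  ∀ y : H, limsup (fun n => dist c (x n) ^ 2) atTop ≤ limsup (fun n => dist y (x n) ^ 2) atTop

/-- `x` weakly converges to `c` if `c` is the asymptotic center of every subsequence of `x`. -/
def WeakConvSeq {H : Type*} [MetricSpace H] (x : ℕ → H) (c : H) : Prop :=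
  ∀ φ : ℕ → ℕ, StrictMono φ → IsAsymptoticCenter (x ∘ φ) c

/-- Mosco convergence of `fn` to `f`. -/
def MoscoConv {H : Type*} [MetricSpace H] (fn : ℕ → H → EReal) (f : H → EReal) : Prop :=
  (∀ (x : H) (xs : ℕ → H), Bornology.IsBounded (Set.range xs) → WeakConvSeq xs x →
      f x ≤ liminf (fun n => fn n (xs n)) atTop) ∧
  (∀ x : H, ∃ ys : ℕ → H, Tendsto ys atTop (𝓝 x) ∧
      Tendsto (fun n => fn n (ys n)) atTop (𝓝 (f x)))

/-- `p` is the resolvent `J_λ x` of `f` at `x`: it minimizes `y ↦ f(y) + d(x,y)²/(2λ)`. -/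
def IsResolventPt {H : Type*} [MetricSpace H] (f : H → EReal) (lam : ℝ) (x p : H) : Prop :=
  ∀ y : H, f p + ((dist x p ^ 2 / (2 * lam) : ℝ) : EReal)
    ≤ f y + ((dist x y ^ 2 / (2 * lam) : ℝ) : EReal)

/-- The Moreau–Yosida envelope `f_λ(x) = inf_y [f(y) + d(x,y)²/(2λ)]`. -/
noncomputable def MoreauEnv {H : Type*} [MetricSpace H] (f : H → EReal) (lam : ℝ) (x : H) :
    EReal :=
  ⨅ y : H, f y + ((dist x y ^ 2 / (2 * lam) : ℝ) : EReal)

/-- `p` is the metric projection of `x` onto `C`. -/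
def IsProjPt {H : Type*} [MetricSpace H] (C : Set H) (x p : H) : Prop :=
  p ∈ C ∧ ∀ c ∈ C, dist x p ≤ dist x c

/-- The indicator function of a set, with values in `(−∞,∞]`. -/
noncomputable def indicatorE {H : Type*} (C : Set H) : H → EReal :=
  fun x => if x ∈ C then (0 : EReal) else ⊤

/-- `y = S_t x` is the gradient-flow semigroup value:
the limit of the iterated resolvents `(J_{t/n})^{(n)} x`. -/
def IsGradientFlowPt {H : Type*} [MetricSpace H] (J : ℝ → H → H) (t : ℝ) (x y : H) : Prop :=
  Tendsto (fun n : ℕ => (J (t / (n : ℝ)))^[n] x) atTop (𝓝 y)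

/-!
Move from the asymptotic center `c` a short way towards `y`, to the point `γ t` of a geodesic
`[c, y]`. Put `D = d(c, y)` and `L = limsup d(c, x_n)²`. Since `d(x_n, y) → D`, taking the limsup in
the CAT(0) inequality at `x_n` gives `limsup d(γ t, x_n)² ≤ (1 - t) L + t² D²`, while minimality of
`c` gives `L ≤ limsup d(γ t, x_n)²`. Hence `L ≤ t D²` for every `t ∈ (0, 1]`, so `L ≤ 0`.
-/

theorem limsup_const_mul_add_le_of_tendsto {ι : Type*} {l : Filter ι} [l.NeBot] {u v : ι → ℝ}
    {a b : ℝ} (ha : 0 ≤ a) (hu : l.IsBoundedUnder (· ≤ ·) u) (hu' : l.IsBoundedUnder (· ≥ ·) u)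
    (hv : Tendsto v l (𝓝 b)) :
    limsup (fun i => a * u i + v i) l ≤ a * limsup u l + b := by
  have hmono : Monotone fun r : ℝ => a * r := monotone_mul_left_of_nonneg ha
  calc limsup (fun i => a * u i + v i) l
      ≤ limsup (fun i => a * u i) l + limsup v l :=
        limsup_add_le (hmono.isBoundedUnder_ge_comp hu') (hmono.isBoundedUnder_le_comp hu)
          hv.isCoboundedUnder_le hv.isBoundedUnder_le
    _ = a * limsup u l + b := by
        rw [hv.limsup_eq, ← Function.comp_def (fun r : ℝ => a * r) u,
          hmono.map_limsup_of_continuousAt u (by fun_prop) hu hu'.isCoboundedUnder_le]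

section PseudoMetricSpace

variable {H ι : Type*} [PseudoMetricSpace H] {l : Filter ι}

theorem isBoundedUnder_le_dist_sq {x : ι → H} {y : H}
    (h : l.IsBoundedUnder (· ≤ ·) fun i => dist (x i) y) (z : H) :
    l.IsBoundedUnder (· ≤ ·) fun i => dist z (x i) ^ 2 := by
  obtain ⟨R, hR⟩ := h.eventually_le
  refine isBoundedUnder_of_eventually_le (a := (dist z y + R) ^ 2) ?_
  filter_upwards [hR] with i hi
  have hzi : dist z (x i) ≤ dist z y + R := (dist_triangle_right _ _ y).trans (by gcongr)
  gcongr

theorem isBoundedUnder_ge_dist_sq (x : ι → H) (z : H) :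
    l.IsBoundedUnder (· ≥ ·) fun i => dist z (x i) ^ 2 :=
  isBoundedUnder_of ⟨0, fun _ => sq_nonneg _⟩

theorem tendsto_of_limsup_dist_sq_nonpos {x : ι → H} {c : H}
    (hbdd : l.IsBoundedUnder (· ≤ ·) fun i => dist c (x i) ^ 2)
    (h : limsup (fun i => dist c (x i) ^ 2) l ≤ 0) : Tendsto x l (𝓝 c) := by
  have hsq : Tendsto (fun i => dist c (x i) ^ 2) l (𝓝 0) :=
    tendsto_order.2 ⟨fun _ ha => .of_forall fun _ => ha.trans_le (sq_nonneg _),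
      fun _ ha => eventually_lt_of_limsup_lt (h.trans_lt ha) hbdd⟩
  rw [tendsto_iff_dist_tendsto_zero]
  simpa only [Real.sqrt_sq dist_nonneg, Real.sqrt_zero, dist_comm c] using hsq.sqrt

end PseudoMetricSpace

section WeakConvSeq

variable {H : Type*} [MetricSpace H]

theorem weakConvSeq_of_tendsto {x : ℕ → H} {c : H} (h : Tendsto x atTop (𝓝 c)) :
    WeakConvSeq x c := by
  intro φ hφ y
  have hlim (z : H) : limsup (fun n => dist z ((x ∘ φ) n) ^ 2) atTop = dist z c ^ 2 :=
    ((tendsto_const_nhds.dist (h.comp hφ.tendsto_atTop)).pow 2).limsup_eq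
  rw [hlim, hlim, dist_self, zero_pow two_ne_zero]
  positivity

theorem WeakConvSeq.isAsymptoticCenter {x : ℕ → H} {c : H} (h : WeakConvSeq x c) :
    IsAsymptoticCenter x c :=
  h id strictMono_id

end WeakConvSeq

/-- A CAT(0) space: a geodesic metric space whose geodesics, parametrized affinely on `[0, 1]` as in
`IsGeodesic`, satisfy the CAT(0) inequality. It frees `HadamardSpace` of completeness. -/
structure CAT0Space (H : Type*) [MetricSpace H] : Prop where
  geodesic : ∀ x y : H, ∃ γ : ℝ → H, IsGeodesic γ ∧ γ 0 = x ∧ γ 1 = y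
  cat0 : ∀ (x : H) (γ : ℝ → H), IsGeodesic γ → ∀ t ∈ Set.Icc (0 : ℝ) 1,
      dist x (γ t) ^ 2 ≤ (1 - t) * dist x (γ 0) ^ 2 + t * dist x (γ 1) ^ 2
        - t * (1 - t) * dist (γ 0) (γ 1) ^ 2

theorem HadamardSpace.cat0Space {H : Type*} [MetricSpace H] [CompleteSpace H]
    (hH : HadamardSpace H) : CAT0Space H :=
  ⟨hH.geodesic, hH.cat0⟩

section CAT0Space

variable {H : Type*} [MetricSpace H]

theorem CAT0Space.limsup_dist_sq_geodesic_le {ι : Type*} {l : Filter ι} [l.NeBot] (hH : CAT0Space H)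
    {γ : ℝ → H} (hγ : IsGeodesic γ) {x : ι → H}
    (hx : Tendsto (fun i => dist (x i) (γ 1)) l (𝓝 (dist (γ 0) (γ 1))))
    {t : ℝ} (ht : t ∈ Set.Icc (0 : ℝ) 1) :
    limsup (fun i => dist (γ t) (x i) ^ 2) l
      ≤ (1 - t) * limsup (fun i => dist (γ 0) (x i) ^ 2) l + t ^ 2 * dist (γ 0) (γ 1) ^ 2 := by
  set D := dist (γ 0) (γ 1)
  set v : ι → ℝ := fun i => t * dist (x i) (γ 1) ^ 2 - t * (1 - t) * D ^ 2
  have hcat (i : ι) : dist (γ t) (x i) ^ 2 ≤ (1 - t) * dist (γ 0) (x i) ^ 2 + v i := by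
    rw [dist_comm (γ t), dist_comm (γ 0), ← add_sub_assoc]
    exact hH.cat0 (x i) γ hγ t ht
  have hv : Tendsto v l (𝓝 (t ^ 2 * D ^ 2)) := by
    convert ((hx.pow 2).const_mul t).sub_const (t * (1 - t) * D ^ 2) using 2
    ring
  have h1t : 0 ≤ 1 - t := sub_nonneg.2 ht.2
  have hbdd := isBoundedUnder_le_dist_sq hx.isBoundedUnder_le (γ 0)
  calc limsup (fun i => dist (γ t) (x i) ^ 2) l
      ≤ limsup (fun i => (1 - t) * dist (γ 0) (x i) ^ 2 + v i) l :=
        limsup_le_limsup (.of_forall hcat) (isBoundedUnder_ge_dist_sq x (γ t)).isCoboundedUnder_le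
          (isBoundedUnder_le_add
            ((monotone_mul_left_of_nonneg h1t).isBoundedUnder_le_comp hbdd) hv.isBoundedUnder_le)
    _ ≤ (1 - t) * limsup (fun i => dist (γ 0) (x i) ^ 2) l + t ^ 2 * D ^ 2 :=
        limsup_const_mul_add_le_of_tendsto h1t hbdd (isBoundedUnder_ge_dist_sq x (γ 0)) hv

theorem IsAsymptoticCenter.limsup_dist_sq_nonpos (hH : CAT0Space H) {x : ℕ → H} {c y : H}
    (hc : IsAsymptoticCenter x c) (hy : Tendsto (fun n => dist (x n) y) atTop (𝓝 (dist c y))) :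
    limsup (fun n => dist c (x n) ^ 2) atTop ≤ 0 := by
  obtain ⟨γ, hγ, rfl, rfl⟩ := hH.geodesic c y
  set D := dist (γ 0) (γ 1)
  set L := limsup (fun n => dist (γ 0) (x n) ^ 2) atTop
  have hL_le : ∀ t ∈ Set.Ioc (0 : ℝ) 1, L ≤ t * D ^ 2 := by
    intro t ht
    have hmin : L ≤ (1 - t) * L + t ^ 2 * D ^ 2 :=
      (hc (γ t)).trans (hH.limsup_dist_sq_geodesic_le hγ hy (Set.Ioc_subset_Icc_self ht))
    refine le_of_mul_le_mul_left ?_ ht.1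
    linarith
  have hlim : Tendsto (fun t : ℝ => t * D ^ 2) (𝓝[>] 0) (𝓝 0) :=
    ((continuous_mul_const _).tendsto' _ _ (zero_mul _)).mono_left nhdsWithin_le_nhds
  exact ge_of_tendsto hlim <| by
    filter_upwards [Ioc_mem_nhdsGT zero_lt_one] using hL_le

theorem IsAsymptoticCenter.tendsto (hH : CAT0Space H) {x : ℕ → H} {c y : H}
    (hc : IsAsymptoticCenter x c) (hy : Tendsto (fun n => dist (x n) y) atTop (𝓝 (dist c y))) :
    Tendsto x atTop (𝓝 c) :=
  tendsto_of_limsup_dist_sq_nonpos (isBoundedUnder_le_dist_sq hy.isBoundedUnder_le c)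
    (hc.limsup_dist_sq_nonpos hH hy)

theorem strong_conv_iff_weak_conv_and_dist_conv_general (hH : CAT0Space H) (x : ℕ → H) (c : H) :
    List.TFAE [
      Tendsto x atTop (𝓝 c),
      WeakConvSeq x c ∧ ∃ y : H, Tendsto (fun n => dist (x n) y) atTop (𝓝 (dist c y)),
      IsAsymptoticCenter x c ∧ ∃ y : H, Tendsto (fun n => dist (x n) y) atTop (𝓝 (dist c y))] := by
  tfae_have 1 → 2 := fun h => ⟨weakConvSeq_of_tendsto h, c, h.dist tendsto_const_nhds⟩
  tfae_have 2 → 3 := And.imp_left WeakConvSeq.isAsymptoticCenter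
  tfae_have 3 → 1 := fun ⟨hc, _, hy⟩ => hc.tendsto hH hy
  tfae_finish

end CAT0Space

/-- In a Hadamard space, a bounded sequence converges strongly to `x` iff it
converges weakly to `x` and `d(x_n,y) → d(x,y)` for some `y`. -/
theorem strong_conv_iff_weak_conv_and_dist_conv
    {H : Type*} [MetricSpace H] [CompleteSpace H] (hH : HadamardSpace H)
    (x : ℕ → H) (hx : Bornology.IsBounded (Set.range x)) (c : H) :
    Tendsto x atTop (𝓝 c) ↔
      (WeakConvSeq x c ∧ ∃ y : H, Tendsto (fun n => dist (x n) y) atTop (𝓝 (dist c y))) :=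
  (strong_conv_iff_weak_conv_and_dist_conv_general hH.cat0Space x c).out 0 1
end

section
/- Let (H,d) be a Hadamard space and f : H → (−∞,∞] a convex lower semicontinuous function. Then f is sequentially weakly lower semicontinuous: for every x ∈ dom f and every bounded sequence (x_n) ⊂ H weakly converging to x, liminf_{n→∞} f(x_n) ≥ f(x). -/
open Filter Topology
open scoped Classical

/-!
A closed convex set `C` contains the asymptotic center `c` of any bounded sequence `xₙ` in `C`.
Let `L = limsup d(c, xₙ)²`. For `p ∈ C` and `t ∈ [0, 1]`, the point at parameter `t` of a geodesic
from `p` to `xₙ` lies in `C`, so the CAT(0) inequality gives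
`d(c, C)² ≤ (1 - t) d(c, p)² + t d(c, xₙ)² - t (1 - t) d(p, xₙ)²`. Since `limsup d(p, xₙ)² ≥ L`,
passing to the limsup in `n` and then to the infimum over `p` yields `t d(c, C)² ≤ t² L`; dividing
by `t` and letting `t → 0` shows `d(c, C) = 0`. Weak lower semicontinuity follows by applying this
to subsequences lying in sublevel sets of `f`.
-/

/-- A geodesic metric space satisfying the CAT(0) inequality; unlike a Hadamard space it need not
be complete. -/
structure CAT0Space_s14 (H : Type*) [MetricSpace H] : Prop where
  geodesic : ∀ x y : H, ∃ γ : ℝ → H, IsGeodesic γ ∧ γ 0 = x ∧ γ 1 = y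
  cat0 : ∀ (x : H) (γ : ℝ → H), IsGeodesic γ → ∀ t ∈ Set.Icc (0:ℝ) 1,
      dist x (γ t) ^ 2 ≤ (1 - t) * dist x (γ 0) ^ 2 + t * dist x (γ 1) ^ 2
        - t * (1 - t) * dist (γ 0) (γ 1) ^ 2

theorem HadamardSpace.toCAT0Space {H : Type*} [MetricSpace H] [CompleteSpace H]
    (hH : HadamardSpace H) : CAT0Space_s14 H :=
  ⟨hH.geodesic, hH.cat0⟩

/-- A function is quasiconvex if its sublevel sets are geodesically convex. -/
def QuasiconvexFun {H β : Type*} [MetricSpace H] [LE β] (f : H → β) : Prop :=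
  ∀ a, GeodesicConvex {y | f y ≤ a}

theorem mul_limsup_add_le_mul_limsup_add {ι : Type*} {F : Filter ι} [F.NeBot] {u v : ι → ℝ}
    {m k b c : ℝ} (hm : 0 ≤ m) (hk : 0 ≤ k)
    (hu : F.IsBoundedUnder (· ≤ ·) u) (hu' : F.IsBoundedUnder (· ≥ ·) u)
    (hv : F.IsBoundedUnder (· ≤ ·) v) (hv' : F.IsBoundedUnder (· ≥ ·) v)
    (huv : ∀ᶠ i in F, m * u i + b ≤ k * v i + c) :
    m * limsup u F + b ≤ k * limsup v F + c := by
  have hmonou : Monotone fun r : ℝ => m * r + b := (monotone_id.const_mul hm).add_const b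
  have hmonov : Monotone fun r : ℝ => k * r + c := (monotone_id.const_mul hk).add_const c
  calc
    m * limsup u F + b = limsup (fun i => m * u i + b) F :=
      hmonou.map_limsup_of_continuousAt u (by fun_prop) hu hu'.isCoboundedUnder_le
    _ ≤ limsup (fun i => k * v i + c) F :=
      limsup_le_limsup huv (hmonou.isBoundedUnder_ge_comp hu').isCoboundedUnder_le
        (hmonov.isBoundedUnder_le_comp hv)
    _ = k * limsup v F + c :=
      (hmonov.map_limsup_of_continuousAt v (by fun_prop) hv hv'.isCoboundedUnder_le).symm

section

variable {H : Type*} [MetricSpace H]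

theorem ConvexFun.quasiconvexFun {f : H → EReal} (hf : ConvexFun f) : QuasiconvexFun f := by
  intro a γ hγ h0 h1 t ht
  have ht0 : (0 : EReal) ≤ (t : ℝ) := EReal.coe_nonneg.2 ht.1
  have ht1 : (0 : EReal) ≤ (1 - t : ℝ) := EReal.coe_nonneg.2 (sub_nonneg.2 ht.2)
  calc
    f (γ t) ≤ ((1 - t : ℝ) : EReal) * f (γ 0) + (t : EReal) * f (γ 1) := hf γ hγ t ht
    _ ≤ ((1 - t : ℝ) : EReal) * a + (t : EReal) * a := by
      gcongr
      exacts [h0, h1]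
    _ = a := by
      rw [← EReal.right_distrib_of_nonneg ht1 ht0, ← EReal.coe_add, sub_add_cancel,
        EReal.coe_one, one_mul]

theorem isBoundedUnder_le_sq_dist {ι : Type*} {x : ι → H}
    (hx : Bornology.IsBounded (Set.range x)) (F : Filter ι) (y : H) :
    F.IsBoundedUnder (· ≤ ·) fun i => dist y (x i) ^ 2 := by
  obtain ⟨R, hR⟩ := hx.subset_closedBall y
  refine isBoundedUnder_of ⟨R ^ 2, fun i => ?_⟩
  gcongr
  exact Metric.mem_closedBall'.1 (hR (Set.mem_range_self i))

theorem CAT0Space_s14.sq_infDist_le (hH : CAT0Space_s14 H) {C : Set H} (hC : GeodesicConvex C)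
    {p q : H} (hp : p ∈ C) (hq : q ∈ C) (c : H) {t : ℝ} (ht : t ∈ Set.Icc (0 : ℝ) 1) :
    Metric.infDist c C ^ 2 ≤
      (1 - t) * dist c p ^ 2 + t * dist c q ^ 2 - t * (1 - t) * dist p q ^ 2 := by
  obtain ⟨γ, hγ, rfl, rfl⟩ := hH.geodesic p q
  calc
    Metric.infDist c C ^ 2 ≤ dist c (γ t) ^ 2 := by
      gcongr
      exacts [Metric.infDist_nonneg, Metric.infDist_le_dist_of_mem (hC γ hγ hp hq t ht)]
    _ ≤ _ := hH.cat0 c γ hγ t ht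

namespace IsAsymptoticCenter

variable {C : Set H} {x : ℕ → H} {c : H}

theorem sq_infDist_le_of_mem (h : IsAsymptoticCenter x c) (hH : CAT0Space_s14 H)
    (hC : GeodesicConvex C) (hx : Bornology.IsBounded (Set.range x)) (hxC : ∀ n, x n ∈ C)
    {p : H} (hp : p ∈ C) {t : ℝ} (ht : t ∈ Set.Icc (0 : ℝ) 1) :
    Metric.infDist c C ^ 2 ≤
      (1 - t) * dist c p ^ 2 + t ^ 2 * limsup (fun n => dist c (x n) ^ 2) atTop := by
  set L := limsup (fun n => dist c (x n) ^ 2) atTop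
  have hm : 0 ≤ t * (1 - t) := mul_nonneg ht.1 (sub_nonneg.2 ht.2)
  have hbdd := isBoundedUnder_le_sq_dist hx atTop
  have hbdd' (y : H) : IsBoundedUnder (· ≥ ·) atTop fun n => dist y (x n) ^ 2 :=
    isBoundedUnder_of ⟨0, fun _ => sq_nonneg _⟩
  have hlim : t * (1 - t) * limsup (fun n => dist p (x n) ^ 2) atTop + Metric.infDist c C ^ 2 ≤
      t * L + (1 - t) * dist c p ^ 2 :=
    mul_limsup_add_le_mul_limsup_add hm ht.1 (hbdd p) (hbdd' p) (hbdd c) (hbdd' c) <|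
      .of_forall fun n => by linarith [hH.sq_infDist_le hC hp (hxC n) c ht]
  have hcenter := mul_le_mul_of_nonneg_left (h p) hm
  linarith

theorem mul_sq_infDist_le (h : IsAsymptoticCenter x c) (hH : CAT0Space_s14 H)
    (hC : GeodesicConvex C) (hx : Bornology.IsBounded (Set.range x)) (hxC : ∀ n, x n ∈ C)
    {t : ℝ} (ht : t ∈ Set.Icc (0 : ℝ) 1) :
    t * Metric.infDist c C ^ 2 ≤ t ^ 2 * limsup (fun n => dist c (x n) ^ 2) atTop := by
  set L := limsup (fun n => dist c (x n) ^ 2) atTop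
  set D := Metric.infDist c C
  have hne : C.Nonempty := ⟨x 0, hxC 0⟩
  have hmem : D ∈ {d : ℝ | D ^ 2 ≤ (1 - t) * d ^ 2 + t ^ 2 * L} := by
    refine closure_minimal ?_ (isClosed_le (by fun_prop) (by fun_prop))
      ((Metric.isGLB_infDist hne).mem_closure (hne.image _))
    rintro _ ⟨p, hp, rfl⟩
    exact h.sq_infDist_le_of_mem hH hC hx hxC hp ht
  linarith [show D ^ 2 ≤ (1 - t) * D ^ 2 + t ^ 2 * L from hmem]

theorem mem_of_isClosed (h : IsAsymptoticCenter x c) (hH : CAT0Space_s14 H) (hC : GeodesicConvex C)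
    (hcl : IsClosed C) (hx : Bornology.IsBounded (Set.range x)) (hxC : ∀ n, x n ∈ C) :
    c ∈ C := by
  set L := limsup (fun n => dist c (x n) ^ 2) atTop
  have hle : ∀ t ∈ Set.Ioc (0 : ℝ) 1, Metric.infDist c C ^ 2 ≤ t * L := fun t ht => by
    refine le_of_mul_le_mul_left ?_ ht.1
    linarith [h.mul_sq_infDist_le hH hC hx hxC (Set.Ioc_subset_Icc_self ht)]
  have htendsto : Tendsto (fun t : ℝ => t * L) (𝓝[>] 0) (𝓝 0) :=
    ((continuous_mul_const L).tendsto' 0 0 (zero_mul L)).mono_left nhdsWithin_le_nhds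
  have hsq : Metric.infDist c C ^ 2 ≤ 0 :=
    ge_of_tendsto htendsto (mem_of_superset (Ioc_mem_nhdsGT one_pos) hle)
  exact (hcl.mem_iff_infDist_zero ⟨x 0, hxC 0⟩).2 (sq_nonpos_iff _ |>.1 hsq)

end IsAsymptoticCenter

theorem WeakConvSeq.mem_of_frequently_mem {C : Set H} {x : ℕ → H} {c : H} (h : WeakConvSeq x c)
    (hH : CAT0Space_s14 H) (hC : GeodesicConvex C) (hcl : IsClosed C)
    (hx : Bornology.IsBounded (Set.range x)) (hxC : ∃ᶠ n in atTop, x n ∈ C) : c ∈ C := by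
  obtain ⟨φ, hφ, hφC⟩ := extraction_of_frequently_atTop hxC
  exact (h φ hφ).mem_of_isClosed hH hC hcl (hx.subset (Set.range_comp_subset_range φ x)) hφC

theorem convex_lsc_weakly_lsc_general {β : Type*} [CompleteLinearOrder β] (hH : CAT0Space_s14 H)
    {f : H → β} (hf : QuasiconvexFun f) (hlsc : LowerSemicontinuous f) {c : H} {x : ℕ → H}
    (hx : Bornology.IsBounded (Set.range x)) (hxc : WeakConvSeq x c) :
    f c ≤ liminf (fun n => f (x n)) atTop := by
  refine (le_liminf_iff).2 fun a ha => ?_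
  by_contra hfreq
  simp only [not_eventually, not_lt] at hfreq
  have hmem : c ∈ {y | f y ≤ a} :=
    hxc.mem_of_frequently_mem hH (hf a) (hlsc.isClosed_preimage a) hx hfreq
  exact ha.not_ge hmem

end

/-- In a Hadamard space, a convex lsc function is sequentially weakly lower
semicontinuous. -/
theorem convex_lsc_weakly_lsc
    {H : Type*} [MetricSpace H] [CompleteSpace H] (hH : HadamardSpace H)
    (f : H → EReal) (hconv : ConvexFun f) (hlsc : LowerSemicontinuous f)
    (c : H) (hc : f c ≠ ⊤)
    (x : ℕ → H) (hx : Bornology.IsBounded (Set.range x)) (hconv' : WeakConvSeq x c) :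
    f c ≤ liminf (fun n => f (x n)) atTop :=
  convex_lsc_weakly_lsc_general hH.toCAT0Space hconv.quasiconvexFun hlsc hx hconv'
end

section
/- Let (H,d) be a Hadamard space, f : H → (−∞,∞] a proper convex lower semicontinuous function, and x₀ ∈ H. Assume there exists a sequence (λ_n) ⊂ (0,∞) with λ_n → ∞ such that the sequence (J_{λ_n} x₀) is bounded. Then J_λ x₀ converges strongly, as λ → ∞, to a minimizer of f; in particular, f attains its minimum on H. -/
/-!
Strong convexity of `d(x₀, ·)²` makes `y ↦ f y + d(x₀, y)² / (2λ)` strongly convex with constant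
`β / (2λ)`, so it grows quadratically away from its minimizer `J_λ x₀`. Adding the growth
inequalities for two parameters `λ ≤ μ`, at each other's resolvent points, cancels the values of
`f` and leaves
`(μ + λ) β d(J_λ x₀, J_μ x₀)² ≤ (μ - λ) (d(x₀, J_μ x₀)² - d(x₀, J_λ x₀)²)`.
Hence `λ ↦ d(x₀, J_λ x₀)²` is nondecreasing, and a bound along one sequence of parameters bounds it
everywhere. It therefore converges, and its increments control `d(J_λ x₀, J_μ x₀)²`, so `J_λ x₀` is
Cauchy. The penalty `d(x₀, y)² / (2λ)` vanishes in the limit, and lower semicontinuity makes the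
limit point a minimizer.
-/

open Filter Topology
open scoped Classical

/-- A geodesic metric space: the part of `HadamardSpace` that carries no curvature condition. -/
def GeodesicSpace (H : Type*) [MetricSpace H] : Prop :=
  ∀ x y : H, ∃ γ : ℝ → H, IsGeodesic γ ∧ γ 0 = x ∧ γ 1 = y

section StrongConvexity

variable {H : Type*} [MetricSpace H] {β : ℝ}

theorem ConvexFun.add_stronglyConvexWith {f : H → EReal} {g : H → ℝ} (hf : ConvexFun f)
    (hg : StronglyConvexWith β fun y => (g y : EReal)) :
    StronglyConvexWith β fun y => f y + g y := by
  intro γ hγ t ht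
  have h1t : (0 : ℝ) ≤ 1 - t := sub_nonneg.2 ht.2
  calc
    f (γ t) + g (γ t)
      ≤ (((1 - t : ℝ) : EReal) * f (γ 0) + (t : EReal) * f (γ 1)) +
          (((1 - t : ℝ) : EReal) * g (γ 0) + (t : EReal) * g (γ 1) -
            ((β * (t * (1 - t)) * dist (γ 0) (γ 1) ^ 2 : ℝ) : EReal)) :=
        add_le_add (hf γ hγ t ht) (hg γ hγ t ht)
    _ = ((1 - t : ℝ) : EReal) * (f (γ 0) + g (γ 0)) + (t : EReal) * (f (γ 1) + g (γ 1)) -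
          ((β * (t * (1 - t)) * dist (γ 0) (γ 1) ^ 2 : ℝ) : EReal) := by
        rw [EReal.left_distrib_of_nonneg_of_ne_top (by exact_mod_cast h1t) (EReal.coe_ne_top _),
          EReal.left_distrib_of_nonneg_of_ne_top (by exact_mod_cast ht.1) (EReal.coe_ne_top _),
          sub_eq_add_neg _ (Real.toEReal _), sub_eq_add_neg _ (Real.toEReal _), ← add_assoc,
          add_add_add_comm]

theorem stronglyConvexWith_coe_iff {g : H → ℝ} :
    StronglyConvexWith β (fun y => (g y : EReal)) ↔
      ∀ γ : ℝ → H, IsGeodesic γ → ∀ t ∈ Set.Icc (0 : ℝ) 1,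
        g (γ t) ≤ (1 - t) * g (γ 0) + t * g (γ 1) -
          β * (t * (1 - t)) * dist (γ 0) (γ 1) ^ 2 := by
  simp only [StronglyConvexWith]
  norm_cast

theorem StronglyConvexWith.div_const {g : H → ℝ}
    (hg : StronglyConvexWith β fun y => (g y : EReal)) {c : ℝ} (hc : 0 ≤ c) :
    StronglyConvexWith (β / c) fun y => ((g y / c : ℝ) : EReal) := by
  rw [stronglyConvexWith_coe_iff] at hg ⊢
  intro γ hγ t ht
  calc
    g (γ t) / c
      ≤ ((1 - t) * g (γ 0) + t * g (γ 1) - β * (t * (1 - t)) * dist (γ 0) (γ 1) ^ 2) / c :=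
        div_le_div_of_nonneg_right (hg γ hγ t ht) hc
    _ = (1 - t) * (g (γ 0) / c) + t * (g (γ 1) / c) -
          β / c * (t * (1 - t)) * dist (γ 0) (γ 1) ^ 2 := by ring

theorem StronglyConvexWith.add_mul_dist_sq_le {F : H → EReal} (hF : StronglyConvexWith β F)
    (hgeo : GeodesicSpace H) {p : H} (hp : ∀ y, F p ≤ F y) (q : H) :
    F p + ((β * dist p q ^ 2 : ℝ) : EReal) ≤ F q := by
  obtain ⟨γ, hγ, rfl, rfl⟩ := hgeo p q
  have hle (t : ℝ) (ht : t ∈ Set.Icc (0 : ℝ) 1) := (hp (γ t)).trans (hF γ hγ t ht)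
  have hpq := hp (γ 1)
  induction hu : F (γ 0) with
  | bot => simp
  | top => simp [top_le_iff.1 (hu ▸ hpq)]
  | coe u =>
  induction hv : F (γ 1) with
  | bot => simp [hu, hv] at hpq
  | top => exact le_top
  | coe v =>
  simp only [hu, hv] at hle
  norm_cast at hle ⊢
  have hsegment : ∀ t ∈ Set.Ioo (0 : ℝ) 1, u + β * (1 - t) * dist (γ 0) (γ 1) ^ 2 ≤ v := by
    intro t ht
    refine le_of_mul_le_mul_left ?_ ht.1
    linarith [hle t (Set.Ioo_subset_Icc_self ht)]
  have hlim : Tendsto (fun t : ℝ => u + β * (1 - t) * dist (γ 0) (γ 1) ^ 2) (𝓝[>] 0)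
      (𝓝 (u + β * dist (γ 0) (γ 1) ^ 2)) := by
    refine (Continuous.tendsto' (by fun_prop) 0 _ ?_).mono_left nhdsWithin_le_nhds
    ring
  exact le_of_tendsto hlim
    (eventually_of_mem (Ioo_mem_nhdsGT one_pos) hsegment)

theorem HadamardSpace.stronglyConvexWith_dist_sq [CompleteSpace H] (hH : HadamardSpace H) (x : H) :
    StronglyConvexWith 1 fun y => ((dist x y ^ 2 : ℝ) : EReal) :=
  stronglyConvexWith_coe_iff.2 (by simpa only [one_mul] using hH.cat0 x)

end StrongConvexity

section Resolvent

variable {H : Type*} [MetricSpace H] {f : H → EReal} {x p q : H} {lam mu β : ℝ}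

theorem IsResolventPt.ne_top (hp : IsResolventPt f lam x p) (hf : ∃ z, f z ≠ ⊤) : f p ≠ ⊤ := by
  obtain ⟨z, hz⟩ := hf
  intro htop
  have hpz := hp z
  rw [htop, EReal.top_add_coe, top_le_iff] at hpz
  exact (EReal.add_lt_top hz (EReal.coe_ne_top _)).ne hpz

theorem IsResolventPt.add_mul_dist_sq_le (hp : IsResolventPt f lam x p) (hgeo : GeodesicSpace H)
    (hdist : StronglyConvexWith β fun y => ((dist x y ^ 2 : ℝ) : EReal)) (hf : ConvexFun f)
    (hlam : 0 < lam) (q : H) :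
    f p + ((dist x p ^ 2 / (2 * lam) : ℝ) : EReal) +
        ((β / (2 * lam) * dist p q ^ 2 : ℝ) : EReal) ≤
      f q + ((dist x q ^ 2 / (2 * lam) : ℝ) : EReal) :=
  (hf.add_stronglyConvexWith (hdist.div_const (by positivity))).add_mul_dist_sq_le hgeo hp q

theorem IsResolventPt.add_mul_dist_sq_le_sub_mul (hp : IsResolventPt f lam x p)
    (hq : IsResolventPt f mu x q) (hgeo : GeodesicSpace H)
    (hdist : StronglyConvexWith β fun y => ((dist x y ^ 2 : ℝ) : EReal)) (hf : ConvexFun f)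
    (hproper : ∃ z, f z ≠ ⊤) (hbot : ∀ z, f z ≠ ⊥) (hlam : 0 < lam) (hmu : 0 < mu) :
    (mu + lam) * (β * dist p q ^ 2) ≤ (mu - lam) * (dist x q ^ 2 - dist x p ^ 2) := by
  have hpq := hp.add_mul_dist_sq_le hgeo hdist hf hlam q
  have hqp := hq.add_mul_dist_sq_le hgeo hdist hf hmu p
  lift f p to ℝ using ⟨hp.ne_top hproper, hbot p⟩ with u
  lift f q to ℝ using ⟨hq.ne_top hproper, hbot q⟩ with v
  norm_cast at hpq hqp
  rw [dist_comm q p] at hqp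
  have hsum := mul_le_mul_of_nonneg_left (add_le_add hpq hqp) (by positivity : 0 ≤ 2 * lam * mu)
  field_simp at hsum
  linarith

theorem IsResolventPt.mul_dist_sq_le_sub (hp : IsResolventPt f lam x p)
    (hq : IsResolventPt f mu x q) (hgeo : GeodesicSpace H) (hβ : 0 < β)
    (hdist : StronglyConvexWith β fun y => ((dist x y ^ 2 : ℝ) : EReal)) (hf : ConvexFun f)
    (hproper : ∃ z, f z ≠ ⊤) (hbot : ∀ z, f z ≠ ⊥) (hlam : 0 < lam) (hle : lam ≤ mu) :
    β * dist p q ^ 2 ≤ dist x q ^ 2 - dist x p ^ 2 := by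
  have hmu := hlam.trans_le hle
  have hcompare := hp.add_mul_dist_sq_le_sub_mul hq hgeo hdist hf hproper hbot hlam hmu
  have hnonneg : 0 ≤ (mu + lam) * (β * dist p q ^ 2) := by positivity
  rcases hle.eq_or_lt with rfl | hlt
  · have hpq : p = q := by
      rw [sub_self, zero_mul] at hcompare
      simpa [hβ.ne', (add_pos hlam hlam).ne'] using hcompare.antisymm hnonneg
    simp [hpq]
  · have hsub : 0 ≤ dist x q ^ 2 - dist x p ^ 2 :=
      nonneg_of_mul_nonneg_right (hnonneg.trans hcompare) (sub_pos.2 hlt)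
    refine le_of_mul_le_mul_left (hcompare.trans ?_) (add_pos hmu hlam)
    gcongr
    linarith

theorem IsResolventPt.le_of_tendsto {ι : Type*} {l : Filter ι} [l.NeBot] {lams : ι → ℝ}
    {ps : ι → H} (hps : ∀ i, IsResolventPt f (lams i) x (ps i)) (hlams : Tendsto lams l atTop)
    {m : H} (hm : Tendsto ps l (𝓝 m)) (hf : LowerSemicontinuousAt f m) (y : H) : f m ≤ f y := by
  have hpenalty : Tendsto (fun i => dist x y ^ 2 / (2 * lams i)) l (𝓝 0) :=
    (hlams.const_mul_atTop two_pos).const_div_atTop _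
  have hlim : Tendsto (fun i => f y + ((dist x y ^ 2 / (2 * lams i) : ℝ) : EReal)) l
      (𝓝 (f y)) := by
    have hadd : ContinuousAt (fun z : EReal × EReal => z.1 + z.2) (f y, (0 : ℝ)) :=
      EReal.continuousAt_add (Or.inr (EReal.coe_ne_bot 0)) (Or.inr (EReal.coe_ne_top 0))
    simpa [Function.comp_def] using hadd.tendsto.comp
      (tendsto_const_nhds.prodMk_nhds ((continuous_coe_real_ereal.tendsto 0).comp hpenalty))
  have hvalue : ∀ᶠ i in l, f (ps i) ≤ f y + ((dist x y ^ 2 / (2 * lams i) : ℝ) : EReal) := by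
    filter_upwards [hlams.eventually_ge_atTop 0] with i hi
    have hnonneg : 0 ≤ dist x (ps i) ^ 2 / (2 * lams i) := by positivity
    exact (le_add_of_nonneg_right (by exact_mod_cast hnonneg)).trans (hps i y)
  calc
    f m ≤ liminf f (𝓝 m) := hf.le_liminf
    _ ≤ liminf (f ∘ ps) l := liminf_le_liminf_of_le hm
    _ ≤ liminf (fun i => f y + ((dist x y ^ 2 / (2 * lams i) : ℝ) : EReal)) l :=
      liminf_le_liminf hvalue
    _ = f y := hlim.liminf_eq

end Resolvent

theorem exists_tendsto_of_dist_sq_le_sub {ι κ X : Type*} [SemilatticeSup ι] [Nonempty ι]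
    [PseudoMetricSpace X] [CompleteSpace X] {u : ι → X} {r : ι → ℝ}
    (h : ∀ a b, a ≤ b → dist (u a) (u b) ^ 2 ≤ r b - r a) {l : Filter κ} [l.NeBot] {s : κ → ι}
    (hs : Tendsto s l atTop) (hrs : BddAbove (Set.range (r ∘ s))) :
    ∃ m, Tendsto u atTop (𝓝 m) := by
  have hmono : Monotone r := fun a b hab => sub_nonneg.1 ((sq_nonneg _).trans (h a b hab))
  have hr : BddAbove (Set.range r) := by
    rwa [BddAbove, ← hmono.upperBounds_range_comp_tendsto_atTop hs]
  have hlim : Tendsto (fun a => √((⨆ i, r i) - r a)) atTop (𝓝 0) := by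
    simpa using ((tendsto_atTop_ciSup hmono hr).const_sub (⨆ i, r i)).sqrt
  refine cauchySeq_tendsto_of_complete (cauchySeq_of_le_tendsto_0' _ (fun a b hab => ?_) hlim)
  exact Real.le_sqrt_of_sq_le ((h a b hab).trans (sub_le_sub_right (le_ciSup hr b) _))

/-- Besides Hadamard spaces (`β = 1`), this covers `L^p` spaces for `1 < p ≤ 2` (`β = p - 1`). -/
theorem resolvent_convergence_to_minimizer_general {H : Type*} [MetricSpace H] [CompleteSpace H]
    (hgeo : GeodesicSpace H) {x₀ : H} {β : ℝ} (hβ : 0 < β)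
    (hdist : StronglyConvexWith β fun y => ((dist x₀ y ^ 2 : ℝ) : EReal))
    {f : H → EReal} (hf : ProperConvexLsc f)
    {J : ℝ → H} (hJ : ∀ lam > (0 : ℝ), IsResolventPt f lam x₀ (J lam))
    {ι : Type*} {l : Filter ι} [l.NeBot] {lams : ι → ℝ} (hpos : ∀ i, 0 < lams i)
    (hto : Tendsto lams l atTop) (hbd : Bornology.IsBounded (Set.range fun i => J (lams i))) :
    ∃ m : H, (∀ y : H, f m ≤ f y) ∧ Tendsto J atTop (𝓝 m) := by
  obtain ⟨hproper, hbot, hconv, hlsc⟩ := hf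
  obtain ⟨R, hR⟩ := hbd.subset_closedBall x₀
  let r : Set.Ioi (0 : ℝ) → ℝ := fun a => dist x₀ (J a) ^ 2 / β
  let s : ι → Set.Ioi (0 : ℝ) := fun i => ⟨lams i, hpos i⟩
  have hincrement (a b : Set.Ioi (0 : ℝ)) (hab : a ≤ b) : dist (J a) (J b) ^ 2 ≤ r b - r a := by
    rw [← sub_div, le_div_iff₀' hβ]
    exact (hJ a a.2).mul_dist_sq_le_sub (hJ b b.2) hgeo hβ hdist hconv hproper hbot a.2 hab
  have hbounded : BddAbove (Set.range (r ∘ s)) := by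
    refine ⟨R ^ 2 / β, ?_⟩
    rintro _ ⟨i, rfl⟩
    have hi : dist x₀ (J (lams i)) ≤ R := Metric.mem_closedBall'.1 (hR ⟨i, rfl⟩)
    exact div_le_div_of_nonneg_right (pow_le_pow_left₀ dist_nonneg hi 2) hβ.le
  obtain ⟨m, hm⟩ := exists_tendsto_of_dist_sq_le_sub hincrement (tendsto_Ioi_atTop.2 hto) hbounded
  exact ⟨m, IsResolventPt.le_of_tendsto (fun a : Set.Ioi (0 : ℝ) => hJ a a.2)
    (tendsto_comp_val_Ioi_atTop.2 tendsto_id) hm (hlsc m), tendsto_comp_val_Ioi_atTop.1 hm⟩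

/-- (Jost) If for some sequence `λ_n → ∞` the resolvents `J_{λ_n} x₀` are
bounded, then `J_λ x₀` converges, as `λ → ∞`, to a minimizer of `f`; in particular `f`
attains its minimum. -/
theorem resolvent_convergence_to_minimizer
    {H : Type*} [MetricSpace H] [CompleteSpace H] (hH : HadamardSpace H)
    (f : H → EReal) (hf : ProperConvexLsc f) (x₀ : H)
    (J : ℝ → H) (hJ : ∀ lam > (0:ℝ), IsResolventPt f lam x₀ (J lam))
    (lams : ℕ → ℝ) (hpos : ∀ n, 0 < lams n) (hto : Tendsto lams atTop atTop)
    (hbd : Bornology.IsBounded (Set.range fun n => J (lams n))) :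
    ∃ m : H, (∀ y : H, f m ≤ f y) ∧ Tendsto J atTop (𝓝 m) :=
  resolvent_convergence_to_minimizer_general hH.geodesic one_pos
    (hH.stronglyConvexWith_dist_sq x₀) hf hJ hpos hto hbd
end
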